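/- Let I be a left L(W)-submodule of L(V,W) and suppose there exist T₁,…,Tₙ ∈ I such that ⋂_{T∈I} ker T = ⋂_{i=1}^n ker Tᵢ. Then I is generated as a left L(W)-module by T₁,…,Tₙ. -/

import Mathlib

variable {D V W : Type*} [DivisionRing D]
  [AddCommGroup V] [Module D V] [AddCommGroup W] [Module D W]

/-- `I` is a right `L(V)`-submodule of `L(V,W)`: closed under addition and
under right composition with arbitrary endomorphisms of `V`. -/
def IsRightSubmodule (I : Set (V →ₗ[D] W)) : Prop :=
  (0 : V →ₗ[D] W) ∈ I ∧ (∀ S T : V →ₗ[D] W, S ∈ I → T ∈ I → S + T ∈ I) ∧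
    (∀ S ∈ I, ∀ A : V →ₗ[D] V, S.comp A ∈ I)

/-- `I` is a left `L(W)`-submodule of `L(V,W)`: closed under addition and
under left composition with arbitrary endomorphisms of `W`. -/
def IsLeftSubmodule (I : Set (V →ₗ[D] W)) : Prop :=
  (0 : V →ₗ[D] W) ∈ I ∧ (∀ S T : V →ₗ[D] W, S ∈ I → T ∈ I → S + T ∈ I) ∧
    (∀ S ∈ I, ∀ A : W →ₗ[D] W, A.comp S ∈ I)

/-- The image of a family of linear maps: the span of the union of their ranges. -/
def imageOf (I : Set (V →ₗ[D] W)) : Submodule D W :=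
  ⨆ T ∈ I, LinearMap.range T

/-- `I` is finitely generated as a right `L(V)`-module. -/
def RightFG (I : Set (V →ₗ[D] W)) : Prop :=
  ∃ (n : ℕ) (T : Fin n → (V →ₗ[D] W)), (∀ i, T i ∈ I) ∧
    ∀ S ∈ I, ∃ P : Fin n → (V →ₗ[D] V), S = ∑ i, (T i).comp (P i)

/-- `I` is finitely generated as a left `L(W)`-module. -/
def LeftFG (I : Set (V →ₗ[D] W)) : Prop :=
  ∃ (n : ℕ) (T : Fin n → (V →ₗ[D] W)), (∀ i, T i ∈ I) ∧
    ∀ S ∈ I, ∃ P : Fin n → (W →ₗ[D] W), S = ∑ i, (P i).comp (T i)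

/-! If `g : V → W` vanishes on the kernel of `f : V → U`, then both factor through `V ⧸ ker f`,
which embeds in `U`, and injectivity of `W` extends the factorization of `g` to a map `U → W`. For
`f = (T₁, …, Tₙ) : V → Wⁿ` this extension is a family of endomorphisms `Pᵢ` of `W`, and
`g = ∑ᵢ Pᵢ ∘ Tᵢ`. -/

section Injective

variable {R M Q : Type*} [Ring R] [AddCommGroup M] [Module R M] [AddCommGroup Q] [Module R Q]

theorem baer_of_isSemisimpleRing [IsSemisimpleRing R] : Module.Baer R Q := fun J g ↦
  have ⟨h, hg⟩ := IsSemisimpleModule.extension_property J.subtype J.injective_subtype g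
  ⟨h, fun x hx ↦ LinearMap.congr_fun hg ⟨x, hx⟩⟩

theorem exists_comp_eq_of_ker_le_ker {N : Type*} [AddCommGroup N] [Module R N]
    (hQ : Module.Baer R Q) (f : M →ₗ[R] N) (g : M →ₗ[R] Q)
    (hfg : LinearMap.ker f ≤ LinearMap.ker g) : ∃ h : N →ₗ[R] Q, h ∘ₗ f = g := by
  let fbar := (LinearMap.ker f).liftQ f le_rfl
  have hfbar : Function.Injective fbar :=
    LinearMap.ker_eq_bot.mp (Submodule.ker_liftQ_eq_bot _ _ le_rfl le_rfl)
  obtain ⟨h, hh⟩ := hQ.extension_property fbar hfbar ((LinearMap.ker f).liftQ g hfg)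
  refine ⟨h, ?_⟩
  calc h ∘ₗ f = (h ∘ₗ fbar) ∘ₗ (LinearMap.ker f).mkQ := by
        rw [LinearMap.comp_assoc, Submodule.liftQ_mkQ]
    _ = g := by rw [hh, Submodule.liftQ_mkQ]

theorem exists_eq_sum_comp_of_iInf_ker_le_ker {ι : Type*} [Fintype ι] {N : ι → Type*}
    [∀ i, AddCommGroup (N i)] [∀ i, Module R (N i)] (hQ : Module.Baer R Q)
    (T : ∀ i, M →ₗ[R] N i) (S : M →ₗ[R] Q) (hker : ⨅ i, LinearMap.ker (T i) ≤ LinearMap.ker S) :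
    ∃ P : ∀ i, N i →ₗ[R] Q, S = ∑ i, P i ∘ₗ T i := by
  classical
  rw [← LinearMap.ker_pi] at hker
  obtain ⟨P, rfl⟩ := exists_comp_eq_of_ker_le_ker hQ (LinearMap.pi T) S hker
  refine ⟨fun i ↦ P ∘ₗ LinearMap.single R N i, LinearMap.ext fun v ↦ ?_⟩
  calc P (LinearMap.pi T v) = P (∑ i, Pi.single i (T i v)) :=
        congrArg P (Finset.univ_sum_single (LinearMap.pi T v)).symm
    _ = (∑ i, (P ∘ₗ LinearMap.single R N i) ∘ₗ T i) v := by
        simp only [map_sum, LinearMap.sum_apply, LinearMap.comp_apply, LinearMap.coe_single]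

theorem stmt_11_general {ι : Type*} [Finite ι] (hQ : Module.Baer R Q)
    (I : Submodule (Module.End R Q) (M →ₗ[R] Q)) (T : ι → M →ₗ[R] Q) (hT : ∀ i, T i ∈ I)
    (hker : ⨅ i, LinearMap.ker (T i) ≤ ⨅ S ∈ I, LinearMap.ker S) :
    I = Submodule.span (Module.End R Q) (Set.range T) := by
  have := Fintype.ofFinite ι
  refine le_antisymm (fun S hS ↦ ?_) (Submodule.span_le.mpr (Set.range_subset_iff.mpr hT))
  obtain ⟨P, hP⟩ := exists_eq_sum_comp_of_iInf_ker_le_ker hQ T S (hker.trans (iInf₂_le S hS))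
  exact (Submodule.mem_span_range_iff_exists_fun _).mpr ⟨P, hP.symm⟩

end Injective

/-- A set closed under left composition as a submodule over the ring `Module.End D W` acting
by composition, so that spans in that module structure apply to it. -/
def IsLeftSubmodule.toSubmodule {I : Set (V →ₗ[D] W)} (hI : IsLeftSubmodule I) :
    Submodule (Module.End D W) (V →ₗ[D] W) where
  carrier := I
  zero_mem' := hI.1
  add_mem' := hI.2.1 _ _
  smul_mem' A S hS := hI.2.2 S hS A

theorem stmt_11 (I : Set (V →ₗ[D] W)) (hI : IsLeftSubmodule I)
    (n : ℕ) (T : Fin n → (V →ₗ[D] W)) (hT : ∀ i, T i ∈ I)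
    (hker : (⨅ S ∈ I, LinearMap.ker S) = ⨅ i, LinearMap.ker (T i)) :
    I = {S : V →ₗ[D] W | ∃ P : Fin n → (W →ₗ[D] W), S = ∑ i, (P i).comp (T i)} := by
  have hspan := stmt_11_general baer_of_isSemisimpleRing hI.toSubmodule T hT hker.ge
  ext S
  calc S ∈ I ↔ S ∈ Submodule.span (Module.End D W) (Set.range T) := SetLike.ext_iff.mp hspan S
    _ ↔ ∃ P : Fin n → (W →ₗ[D] W), S = ∑ i, (P i).comp (T i) :=
      (Submodule.mem_span_range_iff_exists_fun _).trans (exists_congr fun _ ↦ eq_comm)
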